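/- arXiv:1507.00309 — 2 statements merged into one kernel-verified Lean document; each statement's English description precedes it below -/
import Mathlib

section
/- Let k be a subfield of the complex numbers, let G be a finite group, and let p be a prime. Suppose K is a minimal normal subgroup of G with G' ∩ K = 1, where G' is the derived subgroup of G. If acd_{k,p'}(G) ≤ 2, then acd_{k,p'}(G/K) ≤ acd_{k,p'}(G). -/
open scoped BigOperators

/-- The set of irreducible complex characters of `G`, viewed as functions `G → ℂ`. -/
def Irr (G : Type) [Monoid G] : Set (G → ℂ) :=
  {f | ∃ V : FDRep ℂ G, CategoryTheory.Simple V ∧ f = V.character}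

/-- The degree of a character, i.e. its value at the identity (a natural number). -/
noncomputable def charDeg {G : Type} [One G] (f : G → ℂ) : ℕ := ⌊(f 1).re⌋₊

/-- The average of the degrees of the characters in a set `S` of characters. -/
noncomputable def acd {G : Type} [One G] (S : Set (G → ℂ)) : ℝ :=
  (∑ᶠ f ∈ S, (f 1).re) / (S.ncard : ℝ)

/-- `G` has a normal `p`-complement: a normal subgroup of order coprime to `p`
whose index is a power of `p`. -/
def HasNormalPComplement (p : ℕ) (G : Type) [Group G] : Prop :=
  ∃ N : Subgroup G, N.Normal ∧ Nat.Coprime (Nat.card N) p ∧ ∃ n : ℕ, N.index = p ^ n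

/-!
Let `N` be a normal subgroup and let `T` be a set of `k`-valued linear characters of `G`
representing each restriction to `N` exactly once. Then `(χ, ψ) ↦ χ · infl ψ` is an injection of
`T × Irr_{k,p'}(G/N)` into `Irr_{k,p'}(G)` under which the degree is that of `ψ`. Its image `U` has
the same average degree as `Irr_{k,p'}(G/N)` and contains every linear character of
`Irr_{k,p'}(G)`. The characters outside `U` thus have degree at least `2`, which is at least the
overall average, so discarding them does not increase the average.
-/

open Finset in
lemma expect_le_expect_of_subset {ι K : Type*} [Field K] [LinearOrder K] [IsStrictOrderedRing K]
    {s t : Finset ι} {f : ι → K} (hs : s.Nonempty) (hst : s ⊆ t)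
    (hf : ∀ i ∈ t, i ∉ s → 𝔼 j ∈ t, f j ≤ f i) : 𝔼 i ∈ s, f i ≤ 𝔼 i ∈ t, f i := by
  classical
  set a := 𝔼 i ∈ t, f i with ha
  have hrest : #(t \ s) • a ≤ ∑ i ∈ t \ s, f i :=
    card_nsmul_le_sum _ _ _ fun i hi ↦ hf i (mem_sdiff.1 hi).1 (mem_sdiff.1 hi).2
  have hcard : (#(t \ s) : K) + #s = #t := mod_cast card_sdiff_add_card_eq_card hst
  rw [expect_eq_sum_div_card, div_le_iff₀ (mod_cast hs.card_pos)]
  calc ∑ i ∈ s, f i = ∑ i ∈ t, f i - ∑ i ∈ t \ s, f i := by rw [← sum_sdiff hst]; ring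
    _ ≤ #t • a - #(t \ s) • a := by rw [ha, card_smul_expect]; gcongr
    _ = a * #s := by rw [nsmul_eq_mul, nsmul_eq_mul, ← hcard]; ring

open Finset in
lemma sum_comp_of_surjective {G H M : Type*} [Group G] [Fintype G] [Group H] [Fintype H]
    [AddCommMonoid M] {φ : G →* H} (hφ : Function.Surjective φ) (F : H → M) :
    ∑ g, F (φ g) = Nat.card φ.ker • ∑ h, F h := by
  classical
  have hfiber (h : H) : #{g | φ g = h} = Nat.card φ.ker := by
    rw [MonoidHom.card_fiber_eq_of_mem_range φ (hφ h) (hφ 1), Nat.card_eq_fintype_card,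
      Fintype.card_subtype]
    simp only [MonoidHom.mem_ker]
  rw [sum_comp, image_univ_of_surjective hφ, smul_sum]
  simp only [hfiber]

lemma trace_eq_det_of_finrank_eq_one {R M : Type*} [CommRing R] [Nontrivial R] [AddCommGroup M]
    [Module R M] [Module.Free R M] (hM : Module.finrank R M = 1) (u : M →ₗ[R] M) :
    LinearMap.trace R M u = LinearMap.det u := by
  obtain ⟨c, rfl, -⟩ := u.existsUnique_eq_smul_id_of_finrank_eq_one hM
  have : Module.Finite R M := Module.finite_of_finrank_pos (hM ▸ one_pos)
  simp [LinearMap.trace_id, hM]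

section IrreducibleCharacters

variable {G H : Type}

lemma finrank_pos_of_simple [Monoid G] (V : FDRep ℂ G) [CategoryTheory.Simple V] :
    0 < Module.finrank ℂ V := by
  rw [Nat.pos_iff_ne_zero, Ne, Module.finrank_zero_iff]
  intro h
  refine CategoryTheory.id_nonzero V ?_
  ext v
  exact Subsingleton.elim _ _

lemma exists_apply_one_eq_natCast_of_mem_irr [Monoid G] {f : G → ℂ} (hf : f ∈ Irr G) :
    ∃ n : ℕ, 0 < n ∧ f 1 = n := by
  obtain ⟨V, hV, rfl⟩ := hf
  exact ⟨_, finrank_pos_of_simple V, FDRep.char_one V⟩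

lemma apply_one_ne_zero_of_mem_irr [Monoid G] {f : G → ℂ} (hf : f ∈ Irr G) : f 1 ≠ 0 := by
  obtain ⟨n, hn, hfn⟩ := exists_apply_one_eq_natCast_of_mem_irr hf
  rw [hfn]
  exact Nat.cast_ne_zero.2 hn.ne'

lemma exists_monoidHom_of_mem_irr [Monoid G] {f : G → ℂ} (hf : f ∈ Irr G) (h1 : f 1 = 1) :
    ∃ l : G →* ℂ, f = l := by
  obtain ⟨V, -, rfl⟩ := hf
  rw [FDRep.char_one] at h1
  exact ⟨LinearMap.det.comp V.ρ, funext fun g ↦ trace_eq_det_of_finrank_eq_one (mod_cast h1) _⟩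

/-- The one-dimensional representation of `G` on `ℂ` through which `g` acts as multiplication by
`l g`; its character is `l`. -/
noncomputable def linearRep [Monoid G] (l : G →* ℂ) : FDRep ℂ G :=
  FDRep.of ((Algebra.lmul ℂ ℂ : ℂ →* Module.End ℂ ℂ).comp l)

lemma character_linearRep [Monoid G] (l : G →* ℂ) : (linearRep l).character = l :=
  funext fun g ↦ Algebra.trace_self_apply (l g)

section Group

variable [Group G] [Finite G] [Group H]

open CategoryTheory MonoidalCategory in
lemma monoidHom_mul_mem_irr (l : G →* ℂ) {f : G → ℂ} (hf : f ∈ Irr G) : ⇑l * f ∈ Irr G := by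
  have := Fintype.ofFinite G
  obtain ⟨V, hV, rfl⟩ := hf
  have hchar : (linearRep l ⊗ V).character = l * V.character := by
    rw [FDRep.char_tensor, character_linearRep]
  refine ⟨linearRep l ⊗ V, ?_, hchar.symm⟩
  rw [FDRep.simple_iff_char_is_norm_one] at hV ⊢
  rw [hchar, ← hV]
  refine Finset.sum_congr rfl fun g _ ↦ ?_
  simp only [Pi.mul_apply]
  rw [mul_mul_mul_comm, map_mul_eq_one l (mul_inv_cancel g), one_mul]

lemma monoidHom_mem_irr (l : G →* ℂ) : ⇑l ∈ Irr G := by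
  have := Fintype.ofFinite G
  refine ⟨linearRep l, ?_, (character_linearRep l).symm⟩
  rw [FDRep.simple_iff_char_is_norm_one, character_linearRep]
  simp only [map_mul_eq_one l (mul_inv_cancel _), Finset.sum_const, Finset.card_univ,
    Nat.card_eq_fintype_card, nsmul_one]

lemma comp_mem_irr_of_surjective {φ : G →* H} (hφ : Function.Surjective φ)
    {f : H → ℂ} (hf : f ∈ Irr H) : f ∘ φ ∈ Irr G := by
  have := Fintype.ofFinite G
  have := Finite.of_surjective φ hφ
  have := Fintype.ofFinite H
  obtain ⟨V, hV, rfl⟩ := hf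
  refine ⟨FDRep.of (V.ρ.comp φ), ?_, rfl⟩
  rw [FDRep.simple_iff_char_is_norm_one] at hV ⊢
  calc ∑ g, V.character (φ g) * V.character (φ g⁻¹)
      = Nat.card φ.ker • ∑ h, V.character h * V.character h⁻¹ := by
        simpa only [map_inv] using
          sum_comp_of_surjective hφ fun h ↦ V.character h * V.character h⁻¹
    _ = (Nat.card φ.ker * Nat.card H : ℕ) := by rw [hV, nsmul_eq_mul, Nat.cast_mul]
    _ = Nat.card G := by
        rw [← φ.ker.card_mul_index, Subgroup.index_ker, MonoidHom.range_eq_top.2 hφ,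
          Subgroup.card_top]

variable (G) in
lemma finite_irr : (Irr G).Finite := by
  have := Fintype.ofFinite G
  let B : LinearMap.BilinForm ℂ (G → ℂ) :=
    (dotProductBilin ℂ ℂ).compl₂ (LinearMap.funLeft ℂ ℂ Inv.inv)
  have hB (f f' : G → ℂ) : B f f' = ∑ g, f g * f' g⁻¹ := rfl
  refine (LinearMap.linearIndependent_of_isOrthoᵢ (B := B) (v := ((↑) : Irr G → G → ℂ))
    ?_ ?_).setFinite
  · rintro ⟨_, V, hV, rfl⟩ ⟨_, W, hW, rfl⟩ hne
    have : Invertible (Nat.card G : ℂ) := invertibleOfNonzero (by simp)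
    have h := FDRep.char_orthonormal V W
    rw [if_neg fun ⟨i⟩ ↦ hne (Subtype.ext (FDRep.char_iso i))] at h
    simpa [hB] using h
  · rintro ⟨_, V, hV, rfl⟩
    change B V.character V.character ≠ 0
    rw [hB, V.simple_iff_char_is_norm_one.1 hV]
    simp

end Group

end IrreducibleCharacters

section Average

variable {G H : Type} [One G] [One H]

open Finset in
lemma acd_eq_expect {S : Set (G → ℂ)} (hS : S.Finite) :
    acd S = 𝔼 f ∈ hS.toFinset, (f 1).re := by
  rw [acd, finsum_mem_eq_finite_toFinset_sum _ hS, Set.ncard_eq_toFinset_card S hS,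
    expect_eq_sum_div_card]

lemma acd_le_acd_of_subset {U S : Set (G → ℂ)} (hU : U.Nonempty) (hUS : U ⊆ S) (hS : S.Finite)
    (h : ∀ f ∈ S, f ∉ U → acd S ≤ (f 1).re) : acd U ≤ acd S := by
  have hUfin := hS.subset hUS
  rw [acd_eq_expect hUfin]
  rw [acd_eq_expect hS] at h ⊢
  refine expect_le_expect_of_subset (by simpa using hU) (by simpa using hUS) fun f hfS hfU ↦ ?_
  exact h f (hS.mem_toFinset.1 hfS) fun hf ↦ hfU (hUfin.mem_toFinset.2 hf)

open Finset in
lemma acd_image_prod {ι : Type*} {T : Set ι} {R : Set (H → ℂ)} {Φ : ι × (H → ℂ) → G → ℂ}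
    (hT : T.Finite) (hT₀ : T.Nonempty) (hR : R.Finite) (hinj : Set.InjOn Φ (T ×ˢ R))
    (hdeg : ∀ x, Φ x 1 = x.2 1) : acd (Φ '' (T ×ˢ R)) = acd R := by
  classical
  rw [acd_eq_expect ((hT.prod hR).image Φ), acd_eq_expect hR,
    Set.Finite.toFinset_image _ (hT.prod hR), ← Set.Finite.toFinset_prod hT hR,
    expect_image (by simpa using hinj), expect_product]
  simp only [hdeg]
  exact expect_const (by simpa using hT₀) _

end Average

/-- The irreducible characters of `G` with values in `k` and degree in `D`. Taking for `D` the
numbers not divisible by `p` gives `Irr_{k,p'}(G)`. -/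
def irrWithDegreeIn (k : Subfield ℂ) (D : Set ℕ) (G : Type) [Monoid G] : Set (G → ℂ) :=
  {f ∈ Irr G | (∀ g, f g ∈ k) ∧ charDeg f ∈ D}

section Twist

variable {G : Type} {k : Subfield ℂ} {D : Set ℕ}

/-- A `k`-valued linear character as a complex character. Homomorphisms to `kˣ` encode the
`k`-valued linear characters so that these form a group and descend to quotients. -/
noncomputable def linearChar [MulOneClass G] (χ : G →* kˣ) : G →* ℂ :=
  k.subtype.toMonoidHom.comp ((Units.coeHom k).comp χ)

lemma charDeg_eq_one [One G] {f : G → ℂ} (hf : f 1 = 1) : charDeg f = 1 := by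
  simp [charDeg, hf]

variable [Group G]

lemma exists_eq_linearChar {f : G → ℂ} (hf : f ∈ Irr G) (hk : ∀ g, f g ∈ k)
    (h1 : f 1 = 1) : ∃ χ : G →* kˣ, f = linearChar χ := by
  obtain ⟨l, rfl⟩ := exists_monoidHom_of_mem_irr hf h1
  exact ⟨(l.codRestrict k hk).toHomUnits, rfl⟩

lemma two_le_of_forall_ne_linearChar {f : G → ℂ} (hf : f ∈ Irr G) (hk : ∀ g, f g ∈ k)
    (hlin : ∀ χ : G →* kˣ, f ≠ linearChar χ) : 2 ≤ (f 1).re := by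
  obtain ⟨n, hn, hfn⟩ := exists_apply_one_eq_natCast_of_mem_irr hf
  have hn1 : n ≠ 1 := by
    rintro rfl
    obtain ⟨χ, hχ⟩ := exists_eq_linearChar hf hk (mod_cast hfn)
    exact hlin χ hχ
  rw [hfn, Complex.natCast_re]
  exact_mod_cast (show 2 ≤ n by lia)

lemma linearChar_injective :
    Function.Injective fun χ : G →* kˣ ↦ (linearChar χ : G → ℂ) := fun _ _ h ↦ by
  ext g
  exact congrFun h g

variable (N : Subgroup G) [N.Normal]

/-- The product `χ · infl ψ` of a `k`-valued linear character `χ` of `G` and the inflation to `G`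
of a function `ψ` on `G ⧸ N`. -/
noncomputable def twistInflation (x : (G →* kˣ) × (G ⧸ N → ℂ)) : G → ℂ :=
  linearChar x.1 * (x.2 ∘ QuotientGroup.mk' N)

lemma twistInflation_apply_one (x : (G →* kˣ) × (G ⧸ N → ℂ)) :
    twistInflation N x 1 = x.2 1 := by
  simp [twistInflation]

lemma injOn_twistInflation {T : Set (G →* kˣ)}
    (hT : T.InjOn fun χ ↦ χ.domRestrict N) :
    Set.InjOn (twistInflation N) (T ×ˢ Irr (G ⧸ N)) := by
  rintro ⟨χ, ψ⟩ ⟨hχ, hψ⟩ ⟨χ', ψ'⟩ ⟨hχ', -⟩ h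
  have hdeg : ψ 1 = ψ' 1 := by
    simpa only [twistInflation_apply_one] using congrFun h 1
  have hχχ' : χ = χ' := by
    refine hT hχ hχ' (MonoidHom.ext fun n ↦ Units.ext (Subtype.ext ?_))
    have hn : QuotientGroup.mk' N n = 1 := (QuotientGroup.eq_one_iff _).2 n.2
    have hval := congrFun h n
    simp only [twistInflation, Pi.mul_apply, Function.comp_apply, hn, ← hdeg] at hval
    exact mul_right_cancel₀ (apply_one_ne_zero_of_mem_irr hψ) hval
  subst hχχ'
  refine Prod.ext rfl (funext fun q ↦ ?_)
  obtain ⟨g, rfl⟩ := QuotientGroup.mk'_surjective N q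
  exact mul_left_cancel₀ (by simp [linearChar]) (congrFun h g)

variable [Finite G]

lemma linearChar_mem (hD : 1 ∈ D) (χ : G →* kˣ) : ⇑(linearChar χ) ∈ irrWithDegreeIn k D G :=
  ⟨monoidHom_mem_irr _, fun g ↦ (χ g : k).2, by rwa [charDeg_eq_one (map_one _)]⟩

instance finite_monoidHom_units : Finite (G →* kˣ) :=
  have := (finite_irr G).to_subtype
  Finite.of_injective (fun χ ↦ (⟨linearChar χ, monoidHom_mem_irr _⟩ : Irr G)) fun _ _ h ↦
    linearChar_injective (congrArg Subtype.val h)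

variable (k D) in
lemma finite_irrWithDegreeIn : (irrWithDegreeIn k D G).Finite :=
  (finite_irr G).subset fun _ hf ↦ hf.1

lemma twistInflation_mem {x : (G →* kˣ) × (G ⧸ N → ℂ)} (hx : x.2 ∈ irrWithDegreeIn k D (G ⧸ N)) :
    twistInflation N x ∈ irrWithDegreeIn k D G :=
  ⟨monoidHom_mul_mem_irr _ (comp_mem_irr_of_surjective (QuotientGroup.mk'_surjective N) hx.1),
    fun g ↦ k.mul_mem (x.1 g : k).2 (hx.2.1 g), by
      rw [charDeg, twistInflation_apply_one]; exact hx.2.2⟩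

lemma linearChar_mem_image_twistInflation (hD : 1 ∈ D) {T : Set (G →* kˣ)} {χ₀ χ : G →* kˣ}
    (hχ₀ : χ₀ ∈ T) (h : χ₀.domRestrict N = χ.domRestrict N) :
    ⇑(linearChar χ) ∈ twistInflation N '' (T ×ˢ irrWithDegreeIn k D (G ⧸ N)) := by
  have hN : N ≤ (χ₀⁻¹ * χ).ker := fun n hn ↦ inv_mul_eq_one.2 (DFunLike.congr_fun h ⟨n, hn⟩)
  let ψ : G ⧸ N →* kˣ := QuotientGroup.lift N (χ₀⁻¹ * χ) hN
  refine ⟨(χ₀, linearChar ψ), ⟨hχ₀, linearChar_mem hD ψ⟩, funext fun g ↦ ?_⟩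
  simp [twistInflation, linearChar, ψ]

end Twist

theorem acd_quotient_le_of_minimal_central_general
    (k : Subfield ℂ) (G : Type) [Group G] [Finite G] (D : Set ℕ) (hD : 1 ∈ D)
    (N : Subgroup G) [N.Normal] (h2 : acd (irrWithDegreeIn k D G) ≤ 2) :
    acd (irrWithDegreeIn k D (G ⧸ N)) ≤ acd (irrWithDegreeIn k D G) := by
  obtain ⟨T, -, hT⟩ := Set.exists_subset_bijOn Set.univ fun χ : G →* kˣ ↦ χ.domRestrict N
  have hrep (χ : G →* kˣ) : ∃ χ₀ ∈ T, χ₀.domRestrict N = χ.domRestrict N :=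
    hT.surjOn ⟨χ, trivial, rfl⟩
  set U := twistInflation N '' (T ×ˢ irrWithDegreeIn k D (G ⧸ N))
  have hlin (χ : G →* kˣ) : ⇑(linearChar χ) ∈ U :=
    have ⟨_, hχ₀, h⟩ := hrep χ
    linearChar_mem_image_twistInflation N hD hχ₀ h
  have hUsub : U ⊆ irrWithDegreeIn k D G :=
    Set.image_subset_iff.2 fun x hx ↦ twistInflation_mem N hx.2
  have hinj : Set.InjOn (twistInflation N) (T ×ˢ irrWithDegreeIn k D (G ⧸ N)) :=
    (injOn_twistInflation N hT.injOn).mono (Set.prod_mono_right fun _ hψ ↦ hψ.1)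
  have hT₀ : T.Nonempty := (hrep 1).imp fun _ ↦ And.left
  calc acd (irrWithDegreeIn k D (G ⧸ N)) = acd U :=
        (acd_image_prod T.toFinite hT₀ (finite_irrWithDegreeIn k D) hinj
          (twistInflation_apply_one N)).symm
    _ ≤ acd (irrWithDegreeIn k D G) :=
        acd_le_acd_of_subset ⟨_, hlin 1⟩ hUsub (finite_irrWithDegreeIn k D) fun f hf hfU ↦
          h2.trans <| two_le_of_forall_ne_linearChar hf.1 hf.2.1 fun χ hχ ↦ hfU (hχ ▸ hlin χ)

theorem acd_quotient_le_of_minimal_central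
    (k : Subfield ℂ) (G : Type) [Group G] [Fintype G] (p : ℕ) (hp : p.Prime)
    (K : Subgroup G) [K.Normal] (hK : K ≠ ⊥)
    (hmin : ∀ L : Subgroup G, L.Normal → L ≤ K → L = ⊥ ∨ L = K)
    (hcap : commutator G ⊓ K = ⊥)
    (h2 : acd {f ∈ Irr G | (∀ g, f g ∈ k) ∧ ¬ p ∣ charDeg f} ≤ 2) :
    acd {f ∈ Irr (G ⧸ K) | (∀ g, f g ∈ k) ∧ ¬ p ∣ charDeg f} ≤
      acd {f ∈ Irr G | (∀ g, f g ∈ k) ∧ ¬ p ∣ charDeg f} := by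
  exact acd_quotient_le_of_minimal_central_general k G {d | ¬ p ∣ d} hp.not_dvd_one K h2
end

section
/- Let p be a prime and let H be a nonabelian finite group acting faithfully on a faithful irreducible module V over a field of characteristic p, and let k be a subfield of the complex numbers containing the primitive pth roots of unity. If G = V ⋊ H, then acd_{k,p'}(G) ≥ 2. -/
open scoped BigOperators

/-!
The group `H` permutes the characters of `V`. A Sylow `p`-subgroup of `H` fixes a nontrivial one,
so some `χ ≠ 1` has a stabilizer `T` of index prime to `p`. By Clifford theory, extending `χ` to
`V ⋊ T`, twisting by the linear characters of `T` and inducing yields `|Lin T|` distinct irreducible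
characters of `V ⋊ H`, all of degree `|H : T|`. As `H' ≰ T`, this degree exceeds
`|H : T H'|` by at least `2`.

Every linear character of `V ⋊ H` is trivial on `V`, so there are at most
`|Lin H| ≤ |Lin T| * |H : T H'|` of them. Each falls short of degree `2` by one, and the induced
characters make up for all of these deficits.
-/

section Induction

variable {G K : Type*} [Group G] [Field K] {S : Subgroup G}

lemma out_inv_mul_mul_out_mem (g : G) (x : G ⧸ S) : x.out⁻¹ * g * (g⁻¹ • x).out ∈ S := by
  have hmk : ((g⁻¹ * x.out : G) : G ⧸ S) = ((g⁻¹ • x).out : G) := by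
    rw [← smul_eq_mul, ← MulAction.Quotient.smul_coe, QuotientGroup.out_eq', QuotientGroup.out_eq']
  simpa using QuotientGroup.eq.1 hmk

/-- The element of `S` by which `g` carries the chosen representative of the coset `g⁻¹ • x` to
that of `x`; it measures the failure of the choice of representatives to be equivariant. -/
noncomputable def cosetCocycle (S : Subgroup G) (g : G) (x : G ⧸ S) : S :=
  ⟨x.out⁻¹ * g * (g⁻¹ • x).out, out_inv_mul_mul_out_mem g x⟩

lemma cosetCocycle_one (x : G ⧸ S) : cosetCocycle S 1 x = 1 :=
  Subtype.ext (by simp [cosetCocycle])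

lemma cosetCocycle_mul (g h : G) (x : G ⧸ S) :
    cosetCocycle S (g * h) x = cosetCocycle S g x * cosetCocycle S h (g⁻¹ • x) :=
  Subtype.ext (by simp [cosetCocycle, mul_smul, mul_assoc])

/-- The representation of `G` induced from a linear character `ψ` of a subgroup `S`, realised on
functions on `G ⧸ S`, where it is monomial. -/
noncomputable def inducedRep (ψ : S →* Kˣ) : Representation K G (G ⧸ S → K) where
  toFun g :=
    { toFun F x := ψ (cosetCocycle S g x) * F (g⁻¹ • x)
      map_add' _ _ := funext fun _ => mul_add _ _ _
      map_smul' _ _ := funext fun _ => mul_left_comm _ _ _ }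
  map_one' := by
    ext F x
    simp [cosetCocycle_one]
  map_mul' g h := by
    refine LinearMap.ext fun F => funext fun x => ?_
    simp [cosetCocycle_mul, mul_smul, mul_assoc]

variable (ψ : S →* Kˣ)

lemma inducedRep_apply (g : G) (F : G ⧸ S → K) (x : G ⧸ S) :
    inducedRep ψ g F x = ψ (cosetCocycle S g x) * F (g⁻¹ • x) := rfl

lemma inducedRep_single [DecidableEq (G ⧸ S)] (g : G) (x : G ⧸ S) (a : K) :
    inducedRep ψ g (Pi.single x a) =
      Pi.single (g • x) (ψ (cosetCocycle S g (g • x)) * a) := by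
  funext y
  rw [inducedRep_apply]
  rcases eq_or_ne y (g • x) with rfl | hy
  · simp
  · rw [Pi.single_eq_of_ne hy, Pi.single_eq_of_ne (by rwa [Ne, inv_smul_eq_iff]), mul_zero]

lemma character_inducedRep [Fintype (G ⧸ S)] [DecidableEq (G ⧸ S)] (g : G) :
    (inducedRep ψ).character g =
      ∑ x : G ⧸ S, if g⁻¹ • x = x then (ψ (cosetCocycle S g x) : K) else 0 := by
  rw [Representation.character, LinearMap.trace_eq_matrix_trace K (Pi.basisFun K (G ⧸ S)),
    Matrix.trace]
  refine Finset.sum_congr rfl fun x _ => ?_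
  simp [inducedRep_apply, Pi.single_apply]

lemma character_inducedRep_one [S.FiniteIndex] : (inducedRep ψ).character 1 = S.index := by
  have : Fintype (G ⧸ S) := Subgroup.fintypeQuotientOfFiniteIndex
  rw [Representation.char_one, Module.finrank_fintype_fun_eq_card, Subgroup.index,
    Nat.card_eq_fintype_card]

lemma character_inducedRep_map [S.FiniteIndex] {L : Type*} [Field L] (f : K →+* L) (g : G) :
    (inducedRep ((Units.map f.toMonoidHom).comp ψ)).character g =
      f ((inducedRep ψ).character g) := by
  classical
  have : Fintype (G ⧸ S) := Subgroup.fintypeQuotientOfFiniteIndex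
  simp [character_inducedRep, apply_ite f]

lemma inv_smul_coe_one (s : S) : (s : G)⁻¹ • ((1 : G) : G ⧸ S) = (1 : G) := by
  rw [MulAction.Quotient.smul_coe, QuotientGroup.eq]
  simp

lemma map_cosetCocycle_coe_one (s : S) : ψ (cosetCocycle S s ((1 : G) : G ⧸ S)) = ψ s := by
  have hout : ((1 : G) : G ⧸ S).out ∈ S := by
    simpa using QuotientGroup.eq.1 (QuotientGroup.out_eq' ((1 : G) : G ⧸ S)).symm
  have hconj : cosetCocycle S s ((1 : G) : G ⧸ S) = (⟨_, hout⟩ : S)⁻¹ * s * ⟨_, hout⟩ :=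
    Subtype.ext (by simp only [cosetCocycle, inv_smul_coe_one]; rfl)
  rw [hconj, map_mul, map_mul, map_inv, inv_mul_cancel_comm]

end Induction

section Clifford

variable {G A B : Type*} [Group G] [MulOneClass A] [MulOneClass B] {S N : Subgroup G} [N.Normal]

/-- The conjugate `n ↦ θ (g⁻¹ * n * g)` of a linear character `θ` of a normal subgroup. -/
def conjChar (θ : N →* A) (g : G) : N →* A :=
  θ.comp (MulAut.conjNormal g⁻¹).toMonoidHom

lemma conjChar_apply (θ : N →* A) (g : G) (n : N) :
    conjChar θ g n = θ (MulAut.conjNormal g⁻¹ n) := rfl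

lemma conjChar_mul (θ : N →* A) (g h : G) :
    conjChar θ (g * h) = conjChar (conjChar θ h) g := by
  ext n
  simp [conjChar_apply]

lemma conjChar_one (θ : N →* A) : conjChar θ 1 = θ := by
  ext n
  simp [conjChar_apply]

/-- The inertia group of a linear character `θ` of a normal subgroup: the elements of the ambient
group under whose conjugation `θ` is invariant. -/
def inertiaGroup (θ : N →* A) : Subgroup G where
  carrier := {g | conjChar θ g = θ}
  one_mem' := conjChar_one θ
  mul_mem' {g h} (hg : _ = θ) (hh : _ = θ) := show conjChar θ (g * h) = θ by
    rw [conjChar_mul, hh, hg]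
  inv_mem' {g} (hg : _ = θ) := show conjChar θ g⁻¹ = θ by
    nth_rw 1 [← hg]
    rw [← conjChar_mul, inv_mul_cancel, conjChar_one]

lemma mem_inertiaGroup {θ : N →* A} {g : G} : g ∈ inertiaGroup θ ↔ conjChar θ g = θ := Iff.rfl

lemma inertiaGroup_comp {f : A →* B} (hf : Function.Injective f) (θ : N →* A) :
    inertiaGroup (f.comp θ) = inertiaGroup θ := by
  ext g
  rw [mem_inertiaGroup, mem_inertiaGroup, ← MonoidHom.cancel_left hf]
  rfl

lemma conjChar_out_injective {θ : N →* A} (hθ : inertiaGroup θ ≤ S) :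
    Function.Injective fun x : G ⧸ S => conjChar θ x.out := by
  intro x y hxy
  rw [← QuotientGroup.out_eq' x, ← QuotientGroup.out_eq' y, QuotientGroup.eq]
  apply hθ
  rw [mem_inertiaGroup, conjChar_mul, ← show conjChar θ x.out = conjChar θ y.out from hxy,
    ← conjChar_mul, inv_mul_cancel, conjChar_one]

lemma inv_smul_eq_self_of_mem_normal (hNS : N ≤ S) (n : N) (x : G ⧸ S) : (n : G)⁻¹ • x = x := by
  rw [← QuotientGroup.out_eq' x, MulAction.Quotient.smul_coe, QuotientGroup.eq]
  refine hNS ?_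
  simpa [mul_assoc] using ‹N.Normal›.conj_mem n n.2 (x.out)⁻¹

variable {K : Type*} [Field K]

lemma map_cosetCocycle_of_mem_normal (hNS : N ≤ S) (ψ : S →* Kˣ) (n : N) (x : G ⧸ S) :
    ψ (cosetCocycle S n x) = conjChar (ψ.comp (Subgroup.inclusion hNS)) x.out n := by
  refine congrArg ψ (Subtype.ext ?_)
  simp [cosetCocycle, inv_smul_eq_self_of_mem_normal hNS]

lemma sum_inv_mul_monoidHom_eq_ite {Q : Type*} [Group Q] [Fintype Q] (χ χ' : Q →* Kˣ)
    [Decidable (χ = χ')] :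
    ∑ q, (((χ q)⁻¹ * χ' q : Kˣ) : K) = if χ = χ' then (Fintype.card Q : K) else 0 := by
  classical
  have hquot : (Units.coeHom K).comp (χ⁻¹ * χ') = 1 ↔ χ = χ' := by
    rw [← inv_mul_eq_one (a := χ)]
    exact ⟨fun h => MonoidHom.ext fun q => Units.ext (DFunLike.congr_fun h q),
      fun h => by rw [h]; rfl⟩
  simpa [hquot] using sum_hom_units ((Units.coeHom K).comp (χ⁻¹ * χ'))

variable {ψ : S →* Kˣ} (hNS : N ≤ S) (hψ : inertiaGroup (ψ.comp (Subgroup.inclusion hNS)) ≤ S)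
include hψ

lemma sum_inv_conjChar_mul_cosetCocycle [Fintype N] [DecidableEq (G ⧸ S)] (x y : G ⧸ S) :
    ∑ n : N, (((conjChar (ψ.comp (Subgroup.inclusion hNS)) x.out n)⁻¹ *
      ψ (cosetCocycle S n y) : Kˣ) : K) = if x = y then (Fintype.card N : K) else 0 := by
  classical
  simp_rw [map_cosetCocycle_of_mem_normal hNS, sum_inv_mul_monoidHom_eq_ite,
    (conjChar_out_injective hψ).eq_iff]

-- The conjugates of `ψ|N` are pairwise distinct, so averaging over `N` against one of them
-- projects onto the corresponding coordinate line.
lemma sum_conjChar_smul_inducedRep [Fintype N] [DecidableEq (G ⧸ S)] (F : G ⧸ S → K)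
    (x : G ⧸ S) :
    ∑ n : N, (((conjChar (ψ.comp (Subgroup.inclusion hNS)) x.out n)⁻¹ : Kˣ) : K) •
      inducedRep ψ n F = Pi.single x ((Fintype.card N : K) * F x) := by
  funext y
  have hsum := sum_inv_conjChar_mul_cosetCocycle hNS hψ x y
  simp only [Finset.sum_apply, Pi.smul_apply, inducedRep_apply, smul_eq_mul, ← mul_assoc,
    inv_smul_eq_self_of_mem_normal hNS, ← Units.val_mul, ← Finset.sum_mul, hsum]
  rcases eq_or_ne x y with rfl | hxy
  · simp
  · simp [hxy, hxy.symm]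

theorem isIrreducible_inducedRep [Finite N] [S.FiniteIndex] (hN : (Nat.card N : K) ≠ 0) :
    (inducedRep ψ).IsIrreducible := by
  classical
  have : Fintype N := Fintype.ofFinite N
  refine
    { exists_pair_ne := ⟨⊥, ⊤, fun h => bot_ne_top (α := Submodule K (G ⧸ S → K))
        (congrArg Subrepresentation.toSubmodule h)⟩
      eq_bot_or_eq_top W := or_iff_not_imp_left.2 fun hW => ?_ }
  obtain ⟨F, hFW, hF⟩ := W.toSubmodule.exists_mem_ne_zero_of_ne_bot
    fun h => hW (Subrepresentation.toSubmodule_injective h)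
  obtain ⟨x, hx⟩ := Function.ne_iff.1 hF
  have hproj : Pi.single x ((Fintype.card N : K) * F x) ∈ W.toSubmodule := by
    rw [← sum_conjChar_smul_inducedRep hNS hψ]
    exact sum_mem fun n _ => W.toSubmodule.smul_mem _ (W.apply_mem_toSubmodule _ hFW)
  have hbasis (y : G ⧸ S) : Pi.single y 1 ∈ W.toSubmodule := by
    obtain ⟨g, rfl⟩ := MulAction.exists_smul_eq G x y
    have hg := W.apply_mem_toSubmodule g hproj
    rw [inducedRep_single, ← mul_one (_ * (_ * F x)), ← smul_eq_mul, Pi.single_smul] at hg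
    refine (W.toSubmodule.smul_mem_iff (mul_ne_zero (Units.ne_zero _) (mul_ne_zero ?_ hx))).1 hg
    rwa [← Nat.card_eq_fintype_card]
  have : Fintype (G ⧸ S) := Subgroup.fintypeQuotientOfFiniteIndex
  refine Subrepresentation.toSubmodule_injective (top_le_iff.1 ?_)
  rw [← (Pi.basisFun K (G ⧸ S)).span_eq, Submodule.span_le]
  rintro _ ⟨y, rfl⟩
  simpa using hbasis y

lemma sum_inv_conjChar_mul_character_inducedRep [Fintype N] [S.FiniteIndex]
    [DecidableEq (G ⧸ S)] (g : G) (x : G ⧸ S) :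
    ∑ n : N, (((conjChar (ψ.comp (Subgroup.inclusion hNS)) x.out n)⁻¹ : Kˣ) : K) *
      (inducedRep ψ).character (n * g) =
        if g⁻¹ • x = x then (Fintype.card N : K) * ψ (cosetCocycle S g x) else 0 := by
  have : Fintype (G ⧸ S) := Subgroup.fintypeQuotientOfFiniteIndex
  simp only [character_inducedRep, Finset.mul_sum, mul_inv_rev, mul_smul, cosetCocycle_mul,
    inv_smul_eq_self_of_mem_normal hNS, map_mul, Units.val_mul]
  have hproj (y : G ⧸ S) := sum_inv_conjChar_mul_cosetCocycle hNS hψ x y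
  rw [Finset.sum_comm, Finset.sum_eq_single x (fun y _ hyx => ?_) (by simp)]
  · split_ifs
    · simp only [← mul_assoc, ← Finset.sum_mul, ← Units.val_mul (conjChar _ _ _)⁻¹, hproj, if_true]
    · simp
  · split_ifs
    · simp only [← mul_assoc, ← Finset.sum_mul, ← Units.val_mul (conjChar _ _ _)⁻¹, hproj,
        if_neg hyx.symm, zero_mul]
    · simp

theorem eq_of_character_inducedRep_eq [Finite N] [S.FiniteIndex] (hN : (Nat.card N : K) ≠ 0)
    {ψ' : S →* Kˣ}
    (hres : ψ.comp (Subgroup.inclusion hNS) = ψ'.comp (Subgroup.inclusion hNS))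
    (hchar : (inducedRep ψ).character = (inducedRep ψ').character) : ψ = ψ' := by
  classical
  have : Fintype N := Fintype.ofFinite N
  rw [Nat.card_eq_fintype_card] at hN
  ext s
  have hsum := sum_inv_conjChar_mul_character_inducedRep hNS hψ s ((1 : G) : G ⧸ S)
  have hsum' := sum_inv_conjChar_mul_character_inducedRep hNS (hres ▸ hψ) s ((1 : G) : G ⧸ S)
  rw [if_pos (inv_smul_coe_one s), map_cosetCocycle_coe_one] at hsum hsum'
  rw [hres, hchar] at hsum
  exact mul_left_cancel₀ hN (hsum.symm.trans hsum')

end Clifford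

section SemidirectProduct

variable {H V A : Type*} [Group H] [Group V] {φ : H →* MulAut V}

/-- The stabilizer in `H` of a character `χ` of `V`, for the action of `H` on `V` through `φ`. -/
def charStabilizer [MulOneClass A] (φ : H →* MulAut V) (χ : V →* A) : Subgroup H where
  carrier := {h | ∀ v, χ (φ h v) = χ v}
  one_mem' v := by simp
  mul_mem' {g h} hg hh v := by rw [map_mul, MulAut.mul_apply, hg, hh]
  inv_mem' {h} hh v := by
    rw [← hh, ← MulAut.mul_apply, ← map_mul, mul_inv_cancel, map_one, MulAut.one_apply]

-- The elements `φ c v * v⁻¹` with `c ∈ C` lie in the kernels of all conjugates of `χ`. These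
-- kernels intersect in a proper invariant subgroup, which irreducibility forces to be trivial.
theorem le_ker_of_le_charStabilizer [Group A]
    (hirr : ∀ W : Subgroup V, (∀ h : H, ∀ w ∈ W, φ h w ∈ W) → W = ⊥ ∨ W = ⊤)
    {χ : V →* A} (hχ : χ ≠ 1) {C : Subgroup H} [C.Normal] (hC : C ≤ charStabilizer φ χ) :
    C ≤ φ.ker := by
  let W : Subgroup V := ⨅ h, (χ.comp (φ h).toMonoidHom).ker
  have mem_W {v : V} : v ∈ W ↔ ∀ h, χ (φ h v) = 1 := Subgroup.mem_iInf
  have hW : W = ⊥ := by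
    refine (hirr W fun h w hw => mem_W.2 fun g => ?_).resolve_right fun htop => hχ ?_
    · rw [← MulAut.mul_apply, ← map_mul]
      exact mem_W.1 hw (g * h)
    · ext v
      simpa using mem_W.1 (htop ▸ Subgroup.mem_top v) 1
  intro c hc
  ext v
  refine mul_inv_eq_one.1 (Subgroup.mem_bot.1 (hW ▸ mem_W.2 fun h => ?_))
  have hconj := hC (‹C.Normal›.conj_mem c hc h) (φ h v)
  simp only [map_mul, map_inv, MulAut.mul_apply, MulAut.inv_apply_self] at hconj
  rw [map_mul, map_mul, map_inv, map_inv, hconj, MulAut.one_apply, mul_inv_cancel]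

lemma hom_comp_inl_eq_one [CommGroup A]
    (hirr : ∀ W : Subgroup V, (∀ h : H, ∀ w ∈ W, φ h w ∈ W) → W = ⊥ ∨ W = ⊤) (hφ : φ ≠ 1)
    (a : V ⋊[φ] H →* A) : a.comp SemidirectProduct.inl = 1 := by
  by_contra ha
  refine hφ (MonoidHom.ker_eq_top_iff.1 (top_le_iff.1
    (le_ker_of_le_charStabilizer hirr ha fun h _ v => ?_)))
  simp [SemidirectProduct.inl_aut]

lemma hom_apply_inr_right [CommGroup A]
    (hirr : ∀ W : Subgroup V, (∀ h : H, ∀ w ∈ W, φ h w ∈ W) → W = ⊥ ∨ W = ⊤) (hφ : φ ≠ 1)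
    (a : V ⋊[φ] H →* A) (g : V ⋊[φ] H) : a (SemidirectProduct.inr g.right) = a g := by
  have hleft := DFunLike.congr_fun (hom_comp_inl_eq_one hirr hφ a) g.left
  rw [MonoidHom.comp_apply, MonoidHom.one_apply] at hleft
  conv_rhs => rw [← SemidirectProduct.inl_left_mul_inr_right g, map_mul, hleft, one_mul]

/-- The subgroup `V ⋊ T` of `V ⋊ H`, where `T` is the stabilizer of `χ`, encoded as the preimage of
`T`. -/
abbrev charInertia [MulOneClass A] (φ : H →* MulAut V) (χ : V →* A) : Subgroup (V ⋊[φ] H) :=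
  (charStabilizer φ χ).comap SemidirectProduct.rightHom

lemma ker_le_charInertia [MulOneClass A] (χ : V →* A) :
    (SemidirectProduct.rightHom : V ⋊[φ] H →* H).ker ≤ charInertia φ χ :=
  Subgroup.ker_le_comap _ _

lemma index_charInertia [MulOneClass A] (χ : V →* A) :
    (charInertia φ χ).index = (charStabilizer φ χ).index :=
  Subgroup.index_comap_of_surjective _ SemidirectProduct.rightHom_surjective

variable [CommGroup A] {χ : V →* A}

/-- The extension of `χ` to `V ⋊ T`, where `T` is the stabilizer of `χ`, twisted by a linear
character `b` of `T`. -/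
def extendChar (χ : V →* A) (b : charStabilizer φ χ →* A) : charInertia φ χ →* A where
  toFun g := χ g.1.left * b (SemidirectProduct.rightHom.subgroupComap _ g)
  map_one' := by simp
  map_mul' g h := by
    have hg : χ (φ g.1.right h.1.left) = χ h.1.left := g.2 h.1.left
    simp only [Subgroup.coe_mul, SemidirectProduct.mul_left, map_mul, hg]
    exact mul_mul_mul_comm _ _ _ _

lemma extendChar_apply (b : charStabilizer φ χ →* A) (g : charInertia φ χ) :
    extendChar χ b g = χ g.1.left * b (SemidirectProduct.rightHom.subgroupComap _ g) := rfl

lemma extendChar_injective : Function.Injective (extendChar (φ := φ) χ) := by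
  intro b b' h
  ext t
  have ht := DFunLike.congr_fun h ⟨SemidirectProduct.inr t.1, t.2⟩
  rw [extendChar_apply, extendChar_apply] at ht
  exact mul_left_cancel ht

lemma extendChar_inclusion_ker (b : charStabilizer φ χ →* A)
    (n : (SemidirectProduct.rightHom : V ⋊[φ] H →* H).ker) :
    extendChar χ b (Subgroup.inclusion (ker_le_charInertia χ) n) = χ n.1.left := by
  have hn : SemidirectProduct.rightHom.subgroupComap (charStabilizer φ χ)
      (Subgroup.inclusion (ker_le_charInertia χ) n) = 1 := Subtype.ext n.2
  rw [extendChar_apply, hn, map_one, mul_one]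
  rfl

lemma inertiaGroup_extendChar_le (b : charStabilizer φ χ →* A) :
    inertiaGroup ((extendChar χ b).comp (Subgroup.inclusion (ker_le_charInertia χ))) ≤
      charInertia φ χ := by
  intro g hg v
  have hinv := DFunLike.congr_fun (mem_inertiaGroup.1 (inv_mem hg))
    ⟨SemidirectProduct.inl v, SemidirectProduct.rightHom_inl v⟩
  rw [conjChar_apply, MonoidHom.comp_apply, MonoidHom.comp_apply, extendChar_inclusion_ker,
    extendChar_inclusion_ker] at hinv
  simpa [mul_inv_cancel_comm] using hinv

end SemidirectProduct

section LinearCharacters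

variable (Q K : Type*) [Monoid Q] [Field K]

lemma linearIndependent_monoidHom_units :
    LinearIndependent K fun (χ : Q →* Kˣ) (q : Q) => (χ q : K) :=
  (linearIndependent_monoidHom Q K).comp (fun χ : Q →* Kˣ => (Units.coeHom K).comp χ)
    fun _ _ => (MonoidHom.cancel_left Units.val_injective).1

lemma finite_monoidHom_units_s16 [Finite Q] : Finite (Q →* Kˣ) :=
  (linearIndependent_monoidHom_units Q K).finite

lemma card_monoidHom_units_le [Finite Q] : Nat.card (Q →* Kˣ) ≤ Nat.card Q := by
  have : Fintype Q := Fintype.ofFinite Q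
  have := finite_monoidHom_units_s16 Q K
  have : Fintype (Q →* Kˣ) := Fintype.ofFinite _
  simpa [Nat.card_eq_fintype_card] using
    (linearIndependent_monoidHom_units Q K).fintype_card_le_finrank

end LinearCharacters

section FixedCharacter

variable {p : ℕ} [Fact p.Prime] {V K : Type*} [CommGroup V] [Finite V] [Field K]

theorem exists_fixed_character_of_isPGroup {P : Type*} [Group P] (hP : IsPGroup p P)
    [MulDistribMulAction P V] [HasEnoughRootsOfUnity K (Monoid.exponent V)]
    (hpV : p ∣ Nat.card V) : ∃ χ : V →* Kˣ, χ ≠ 1 ∧ ∀ (g : P) (v : V), χ (g • v) = χ v := by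
  have := finite_monoidHom_units_s16 V K
  have hcard : p ∣ Nat.card (V →* Kˣ) := by
    rwa [CommGroup.card_monoidHom_of_hasEnoughRootsOfUnity]
  have hP' : IsPGroup p Pᵈᵐᵃ := hP.of_equiv (MulEquiv.inv' P)
  have hone : (1 : V →* Kˣ) ∈ MulAction.fixedPoints Pᵈᵐᵃ (V →* Kˣ) := fun g => by
    ext
    rfl
  obtain ⟨χ, hfix, hχ⟩ := hP'.exists_fixed_point_of_prime_dvd_card_of_fixed_point _ hcard hone
  exact ⟨χ, hχ.symm, fun g v => DFunLike.congr_fun (hfix (DomMulAct.mk g)) v⟩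

theorem exists_not_dvd_index_charStabilizer {H : Type*} [Group H] [Finite H]
    [HasEnoughRootsOfUnity K (Monoid.exponent V)] (hpV : p ∣ Nat.card V) (φ : H →* MulAut V) :
    ∃ χ : V →* Kˣ, χ ≠ 1 ∧ ¬ p ∣ (charStabilizer φ χ).index := by
  obtain ⟨P⟩ : Nonempty (Sylow p H) := inferInstance
  let _ : MulDistribMulAction P V := MulDistribMulAction.compHom V (φ.comp (P : Subgroup H).subtype)
  obtain ⟨χ, hχ, hfix⟩ := exists_fixed_character_of_isPGroup (K := K) P.isPGroup' hpV
  have hP : (P : Subgroup H) ≤ charStabilizer φ χ := fun h hh v => hfix ⟨h, hh⟩ v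
  exact ⟨χ, hχ, fun hp => P.not_dvd_index (hp.trans (Subgroup.index_dvd_of_le hP))⟩

end FixedCharacter

section LinearCharacterCount

variable {H : Type*} [Group H]

lemma commutator_le_of_index_eq_two {T : Subgroup H} (hT : T.index = 2) : commutator H ≤ T := by
  have := Subgroup.normal_of_index_eq_two hT
  rw [← Subgroup.Normal.quotient_commutative_iff_commutator_le]
  have : Fact (Nat.Prime 2) := ⟨Nat.prime_two⟩
  exact (isCyclic_of_prime_card (p := 2) hT).isMulCommutative

-- `|H : T|` factors through `|H : TH'|` with quotient at least `2`, and is not `2` itself since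
-- subgroups of index `2` contain `H'`.
lemma index_sup_commutator_add_two_le [Finite H] {T : Subgroup H} (hT : ¬ commutator H ≤ T) :
    (T ⊔ commutator H).index + 2 ≤ T.index := by
  have hmul := Subgroup.relIndex_mul_index (le_sup_left : T ≤ T ⊔ commutator H)
  have hrel : T.relIndex (T ⊔ commutator H) ≠ 1 := fun h =>
    hT (le_sup_right.trans (Subgroup.relIndex_eq_one.1 h))
  have htwo : T.index ≠ 2 := mt commutator_le_of_index_eq_two hT
  have hindex : T.index ≠ 0 := Subgroup.index_ne_zero_of_finite
  rw [← hmul] at htwo hindex ⊢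
  obtain ⟨hrel0, hsup0⟩ := mul_ne_zero_iff.1 hindex
  have hdouble := Nat.mul_le_mul_right (T ⊔ commutator H).index
    (show 2 ≤ T.relIndex (T ⊔ commutator H) by lia)
  lia

lemma card_ker_domRestrictHom_le [Finite H] (K : Type*) [Field K] (N : Subgroup H) [N.Normal] :
    Nat.card (MonoidHom.domRestrictHom N Kˣ).ker ≤ N.index :=
  (Nat.card_congr (MonoidHom.domRestrictHomKerEquiv Kˣ N).toEquiv).trans_le
    (card_monoidHom_units_le _ K)

theorem card_monoidHom_units_le_mul [Finite H] (K : Type*) [Field K] (T : Subgroup H) :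
    Nat.card (H →* Kˣ) ≤ Nat.card (T →* Kˣ) * (T ⊔ commutator H).index := by
  have := finite_monoidHom_units_s16 T K
  have := finite_monoidHom_units_s16 H K
  have : (T ⊔ commutator H).Normal := Subgroup.Normal.of_commutator_le _ le_sup_right
  let res : (H →* Kˣ) →* (T →* Kˣ) := MonoidHom.domRestrictHom T Kˣ
  have hker : res.ker ≤ (MonoidHom.domRestrictHom (T ⊔ commutator H) Kˣ).ker := by
    intro f hf
    rw [MonoidHom.mem_ker, MonoidHom.domRestrictHom_apply, MonoidHom.domRestrict_eq_one_iff] at hf ⊢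
    exact sup_le hf (Abelianization.commutator_subset_ker f)
  calc Nat.card (H →* Kˣ) = Nat.card res.range * Nat.card res.ker := by
        rw [← Subgroup.card_mul_index res.ker, Subgroup.index_ker, mul_comm]
    _ ≤ Nat.card (T →* Kˣ) * (T ⊔ commutator H).index :=
        Nat.mul_le_mul (Subgroup.card_le_card_group _)
          ((Subgroup.card_le_of_le hker).trans (card_ker_domRestrictHom_le K _))

end LinearCharacterCount

section IrreducibleCharacters

lemma sum_mul_inv_of_mem_irr {G : Type} [Group G] [Fintype G] {f g : G → ℂ}
    (hf : f ∈ Irr G) (hg : g ∈ Irr G) [Decidable (f = g)] :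
    ∑ x, f x * g x⁻¹ = if f = g then (Nat.card G : ℂ) else 0 := by
  have hcard : (Nat.card G : ℂ) ≠ 0 := Nat.cast_ne_zero.2 Nat.card_pos.ne'
  have := invertibleOfNonzero hcard
  obtain ⟨V, hV, rfl⟩ := hf
  obtain ⟨W, hW, rfl⟩ := hg
  split_ifs with h
  · have horth := FDRep.char_orthonormal W W
    rw [if_pos ⟨CategoryTheory.Iso.refl _⟩, inv_mul_eq_one₀ hcard] at horth
    rw [h, horth]
  · have horth := FDRep.char_orthonormal V W
    rw [if_neg fun ⟨i⟩ => h (FDRep.char_iso i)] at horth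
    exact (mul_eq_zero.1 horth).resolve_left (inv_ne_zero hcard)

theorem irr_finite (G : Type) [Group G] [Finite G] : (Irr G).Finite := by
  classical
  have : Fintype G := Fintype.ofFinite G
  let pairing : (G → ℂ) →ₗ[ℂ] (G → ℂ) →ₗ[ℂ] ℂ :=
    (dotProductBilin ℂ ℂ).compl₂ (LinearMap.funLeft ℂ ℂ Inv.inv)
  have hpairing (f g : Irr G) :
      pairing f g = if (f : G → ℂ) = g then (Nat.card G : ℂ) else 0 :=
    sum_mul_inv_of_mem_irr f.2 g.2
  have hindep : LinearIndependent ℂ fun f : Irr G => (f : G → ℂ) := by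
    refine LinearMap.linearIndependent_of_isOrthoᵢ (B := pairing)
      (LinearMap.isOrthoᵢ_def.2 fun f g hfg => ?_) fun f => ?_
    · rw [hpairing, if_neg (Subtype.coe_injective.ne hfg)]
    · rw [hpairing, if_pos rfl]
      exact Nat.cast_ne_zero.2 Nat.card_pos.ne'
  exact Set.finite_coe_iff.1 hindep.finite

theorem character_mem_irr {G U : Type} [Group G] [Finite G] [AddCommGroup U] [Module ℂ U]
    [FiniteDimensional ℂ U] (ρ : Representation ℂ G U) [ρ.IsIrreducible] : ρ.character ∈ Irr G := by
  have : Fintype G := Fintype.ofFinite G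
  have hcard : (Nat.card G : ℂ) ≠ 0 := Nat.cast_ne_zero.2 Nat.card_pos.ne'
  have := invertibleOfNonzero hcard
  refine ⟨FDRep.of ρ, (FDRep.simple_iff_char_is_norm_one _).2 ?_, rfl⟩
  have horth := Representation.char_orthonormal ρ ρ
  rw [if_pos ⟨Representation.Equiv.refl _⟩, inv_mul_eq_one₀ hcard] at horth
  exact horth.symm

lemma trace_mul_of_finrank_eq_one {R M : Type*} [CommRing R] [Nontrivial R] [AddCommGroup M]
    [Module R M] [Module.Free R M] (hM : Module.finrank R M = 1) (f g : Module.End R M) :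
    LinearMap.trace R M (f * g) = LinearMap.trace R M f * LinearMap.trace R M g := by
  have : Module.Finite R M := Module.finite_of_finrank_pos (hM ▸ one_pos)
  obtain ⟨a, rfl⟩ := (LinearMap.existsUnique_eq_smul_id_of_finrank_eq_one hM f).exists
  obtain ⟨b, rfl⟩ := (LinearMap.existsUnique_eq_smul_id_of_finrank_eq_one hM g).exists
  have htrace : LinearMap.trace R M 1 = 1 := by rw [LinearMap.trace_one, hM, Nat.cast_one]
  rw [← Module.End.one_eq_id, smul_mul_smul_comm, mul_one]
  simp only [map_smul, htrace, smul_eq_mul, mul_one]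

variable {G : Type}

lemma exists_natCast_of_mem_irr [Monoid G] {f : G → ℂ} (hf : f ∈ Irr G) : ∃ n : ℕ, f 1 = n := by
  obtain ⟨W, -, rfl⟩ := hf
  exact ⟨_, W.char_one⟩

lemma map_mul_of_mem_irr [Monoid G] {f : G → ℂ} (hf : f ∈ Irr G) (hf1 : f 1 = 1) (x y : G) :
    f (x * y) = f x * f y := by
  obtain ⟨W, -, rfl⟩ := hf
  have hW : Module.finrank ℂ W = 1 := by exact_mod_cast W.char_one.symm.trans hf1
  exact (congrArg _ (map_mul W.ρ x y)).trans (trace_mul_of_finrank_eq_one hW _ _)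

lemma exists_unit_hom_of_mem_irr [Group G] {f : G → ℂ} (hf : f ∈ Irr G) (hf1 : f 1 = 1)
    {k : Subfield ℂ} (hk : ∀ g, f g ∈ k) : ∃ a : G →* kˣ, ∀ g, ((a g : k) : ℂ) = f g := by
  let a : G →* k :=
    { toFun g := ⟨f g, hk g⟩
      map_one' := Subtype.ext hf1
      map_mul' x y := Subtype.ext (map_mul_of_mem_irr hf hf1 x y) }
  exact ⟨a.toHomUnits, fun g => rfl⟩

end IrreducibleCharacters

section Averaging

theorem two_le_acd {G : Type} [One G] {S L M : Set (G → ℂ)} (d : ℕ) (hS : S.Finite)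
    (hS' : S.Nonempty) (hLS : L ⊆ S) (hMS : M ⊆ S)
    (hSL : ∀ f ∈ S \ L, 2 ≤ (f 1).re) (hL : ∀ f ∈ L, 1 ≤ (f 1).re)
    (hM : ∀ f ∈ M, d + 2 ≤ (f 1).re) (hcard : L.ncard ≤ M.ncard * d) : 2 ≤ acd S := by
  classical
  lift S to Finset (G → ℂ) using hS
  lift L to Finset (G → ℂ) using S.finite_toSet.subset hLS
  lift M to Finset (G → ℂ) using S.finite_toSet.subset hMS
  rw [Set.ncard_coe_finset, Set.ncard_coe_finset] at hcard
  rw [Finset.coe_subset] at hLS hMS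
  have hexcess : ∑ f ∈ S, ((if f ∈ M then (d : ℝ) else 0) - if f ∈ L then 1 else 0) ≤
      ∑ f ∈ S, ((f 1).re - 2) := by
    refine Finset.sum_le_sum fun f hf => ?_
    have hone (h : f ∈ L) := hL f h
    have hd (h : f ∈ M) := hM f h
    have htwo (h : f ∉ L) := hSL f ⟨hf, h⟩
    split_ifs with hfM hfL hfL <;> grind
  rw [Finset.sum_sub_distrib, Finset.sum_sub_distrib, Finset.sum_ite_mem, Finset.sum_ite_mem,
    Finset.inter_eq_right.2 hLS, Finset.inter_eq_right.2 hMS] at hexcess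
  simp only [Finset.sum_const, nsmul_eq_mul, mul_one] at hexcess
  have hcard' : (L.card : ℝ) ≤ M.card * d := by exact_mod_cast hcard
  rw [acd, finsum_mem_coe_finset, Set.ncard_coe_finset, le_div_iff₀]
  · linarith
  · exact_mod_cast Finset.card_pos.2 hS'

end Averaging

section InducedFromStabilizer

variable {H V : Type} [Group H] [Group V] {φ : H →* MulAut V} {k : Subfield ℂ} {χ : V →* kˣ}

/-- The character of `V ⋊ H` obtained from `χ` by Clifford theory: extend `χ` to `V ⋊ T`, where `T`
is the stabilizer of `χ`, twist the extension by the linear character `b` of `T`, and induce. -/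
noncomputable def cliffordChar (χ : V →* kˣ) (b : charStabilizer φ χ →* kˣ) : V ⋊[φ] H → ℂ :=
  (inducedRep ((Units.map k.subtype.toMonoidHom).comp (extendChar χ b))).character

lemma units_map_subtype_injective : Function.Injective (Units.map k.subtype.toMonoidHom) :=
  Units.map_injective k.subtype.injective

lemma inertiaGroup_map_extendChar_le (b : charStabilizer φ χ →* kˣ) :
    inertiaGroup (((Units.map k.subtype.toMonoidHom).comp (extendChar χ b)).comp
      (Subgroup.inclusion (ker_le_charInertia χ))) ≤ charInertia φ χ :=
  (inertiaGroup_comp units_map_subtype_injective _).trans_le (inertiaGroup_extendChar_le b)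

variable [Finite H]

instance finiteIndex_charInertia : (charInertia φ χ).FiniteIndex :=
  ⟨(index_charInertia (φ := φ) χ).trans_ne Subgroup.index_ne_zero_of_finite⟩

lemma cliffordChar_one (b : charStabilizer φ χ →* kˣ) :
    cliffordChar χ b 1 = (charStabilizer φ χ).index := by
  rw [cliffordChar, character_inducedRep_one, index_charInertia]

lemma charDeg_cliffordChar (b : charStabilizer φ χ →* kˣ) :
    charDeg (cliffordChar χ b) = (charStabilizer φ χ).index := by
  rw [charDeg, cliffordChar_one, Complex.natCast_re, Nat.floor_natCast]

lemma cliffordChar_apply_mem (b : charStabilizer φ χ →* kˣ) (g : V ⋊[φ] H) :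
    cliffordChar χ b g ∈ k := by
  have hval : cliffordChar χ b g = k.subtype ((inducedRep (extendChar χ b)).character g) :=
    character_inducedRep_map _ _ g
  rw [hval]
  exact SetLike.coe_mem _

variable [Finite V]

lemma finite_semidirectProduct : Finite (V ⋊[φ] H) :=
  Finite.of_equiv _ SemidirectProduct.equivProd.symm

theorem cliffordChar_mem_irr (b : charStabilizer φ χ →* kˣ) :
    cliffordChar χ b ∈ Irr (V ⋊[φ] H) := by
  have : Finite (V ⋊[φ] H) := finite_semidirectProduct
  have := isIrreducible_inducedRep (ker_le_charInertia χ) (inertiaGroup_map_extendChar_le b)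
    (Nat.cast_ne_zero.2 Nat.card_pos.ne')
  exact character_mem_irr _

theorem cliffordChar_injective :
    Function.Injective (cliffordChar χ : (charStabilizer φ χ →* kˣ) → V ⋊[φ] H → ℂ) := by
  intro b b' h
  have : Finite (V ⋊[φ] H) := finite_semidirectProduct
  have hres : (extendChar χ b).comp (Subgroup.inclusion (ker_le_charInertia χ)) =
      (extendChar χ b').comp (Subgroup.inclusion (ker_le_charInertia χ)) :=
    MonoidHom.ext fun n =>
      (extendChar_inclusion_ker b n).trans (extendChar_inclusion_ker b' n).symm
  have hext := eq_of_character_inducedRep_eq (ker_le_charInertia χ)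
    (inertiaGroup_map_extendChar_le b) (Nat.cast_ne_zero.2 Nat.card_pos.ne')
    (congrArg (Units.map k.subtype.toMonoidHom).comp hres) h
  exact extendChar_injective ((MonoidHom.cancel_left units_map_subtype_injective).1 hext)

end InducedFromStabilizer

section AverageDegree

lemma hasEnoughRootsOfUnity_subfield {n : ℕ} [NeZero n] {k : Subfield ℂ}
    (hk : ∀ ζ : ℂ, IsPrimitiveRoot ζ n → ζ ∈ k) : HasEnoughRootsOfUnity k n where
  prim :=
    have hζ := Complex.isPrimitiveRoot_exp n (NeZero.ne n)
    ⟨⟨_, hk _ hζ⟩, IsPrimitiveRoot.of_map_of_injective (f := k.subtype) hζ k.subtype.injective⟩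
  cyc := inferInstance

lemma exists_character_not_dvd_index {p : ℕ} (hp : p.Prime) {H V : Type*} [Group H] [Finite H]
    [CommGroup V] [Finite V] [Nontrivial V] (helem : ∀ v : V, v ^ p = 1) {k : Subfield ℂ}
    (hk : ∀ ζ : ℂ, IsPrimitiveRoot ζ p → ζ ∈ k) (φ : H →* MulAut V) :
    ∃ χ : V →* kˣ, χ ≠ 1 ∧ ¬ p ∣ (charStabilizer φ χ).index := by
  have : Fact p.Prime := ⟨hp⟩
  have := hasEnoughRootsOfUnity_subfield hk
  have := HasEnoughRootsOfUnity.of_dvd k (Monoid.exponent_dvd_of_forall_pow_eq_one helem)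
  obtain ⟨v, hv⟩ := exists_ne (1 : V)
  exact exists_not_dvd_index_charStabilizer
    (orderOf_eq_prime (helem v) hv ▸ orderOf_dvd_natCard v) φ

lemma not_commutator_le_ker {Q R : Type*} [Group Q] [Group R] {f : Q →* R}
    (hf : ∃ x y, f (x * y) ≠ f (y * x)) : ¬ commutator Q ≤ f.ker := by
  obtain ⟨x, y, hxy⟩ := hf
  intro hle
  have hcomm := hle (Subgroup.commutator_mem_commutator (Subgroup.mem_top x) (Subgroup.mem_top y))
  rw [MonoidHom.mem_ker, map_commutatorElement, commutatorElement_eq_one_iff_mul_comm] at hcomm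
  exact hxy (by rw [map_mul, hcomm, map_mul])

lemma two_le_re_of_mem_irr {G : Type} [Monoid G] {p : ℕ} {f : G → ℂ} (hf : f ∈ Irr G)
    (hp : ¬ p ∣ charDeg f) (hf1 : f 1 ≠ 1) : 2 ≤ (f 1).re := by
  obtain ⟨n, hn⟩ := exists_natCast_of_mem_irr hf
  have hn1 : n ≠ 1 := by
    rintro rfl
    exact hf1 (hn.trans Nat.cast_one)
  have hn0 : n ≠ 0 := by
    rintro rfl
    simp [charDeg, hn] at hp
  have : 2 ≤ n := by lia
  simpa [hn] using this

lemma ncard_linear_irr_le {H V : Type} [Group H] [Group V] [Finite H] {φ : H →* MulAut V}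
    (hirr : ∀ W : Subgroup V, (∀ h : H, ∀ w ∈ W, φ h w ∈ W) → W = ⊥ ∨ W = ⊤) (hφ : φ ≠ 1)
    {k : Subfield ℂ} {L : Set (V ⋊[φ] H → ℂ)}
    (hL : ∀ f ∈ L, f ∈ Irr (V ⋊[φ] H) ∧ f 1 = 1 ∧ ∀ g, f g ∈ k) :
    L.ncard ≤ Nat.card (H →* kˣ) := by
  have := finite_monoidHom_units_s16 H k
  let lift (a : H →* kˣ) (g : V ⋊[φ] H) : ℂ := ((a g.right : k) : ℂ)
  have hsub : L ⊆ Set.range lift := by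
    intro f hfL
    obtain ⟨hf, hf1, hfk⟩ := hL f hfL
    obtain ⟨a, ha⟩ := exists_unit_hom_of_mem_irr hf hf1 hfk
    refine ⟨a.comp SemidirectProduct.inr, funext fun g => ?_⟩
    rw [← ha, ← hom_apply_inr_right hirr hφ a]
    rfl
  calc L.ncard ≤ (Set.range lift).ncard := Set.ncard_le_ncard hsub (Set.finite_range lift)
    _ ≤ Nat.card (H →* kˣ) := by
      rw [← Set.image_univ, ← Set.ncard_univ]
      exact Set.ncard_image_le Set.finite_univ

end AverageDegree

theorem nonabelian_semidirect_acd_pprime_ge_two_general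
    (p : ℕ) (hp : p.Prime)
    (H V : Type) [Group H] [Finite H] [CommGroup V] [Finite V]
    (helem : ∀ v : V, v ^ p = 1)
    (φ : H →* MulAut V) (hnab : ∃ x y : H, φ (x * y) ≠ φ (y * x))
    (hirr : ∀ W : Subgroup V, (∀ h : H, ∀ w ∈ W, φ h w ∈ W) → W = ⊥ ∨ W = ⊤)
    (k : Subfield ℂ) (hk : ∀ ζ : ℂ, IsPrimitiveRoot ζ p → ζ ∈ k) :
    2 ≤ acd {f ∈ Irr (V ⋊[φ] H) | (∀ g, f g ∈ k) ∧ ¬ p ∣ charDeg f} := by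
  have : Finite (V ⋊[φ] H) := finite_semidirectProduct
  have hφ : φ ≠ 1 := by
    rintro rfl
    simp at hnab
  have : Nontrivial V := not_subsingleton_iff_nontrivial.1 fun _ =>
    hφ (MonoidHom.ext fun _ => MulEquiv.ext fun _ => Subsingleton.elim _ _)
  obtain ⟨χ, hχ, hpT⟩ := exists_character_not_dvd_index hp helem hk φ
  set T := charStabilizer φ χ
  have hT : ¬ commutator H ≤ T := fun h =>
    not_commutator_le_ker hnab (le_ker_of_le_charStabilizer hirr hχ h)
  set S := {f ∈ Irr (V ⋊[φ] H) | (∀ g, f g ∈ k) ∧ ¬ p ∣ charDeg f}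
  have hmem (b : T →* kˣ) : cliffordChar χ b ∈ S :=
    ⟨cliffordChar_mem_irr b, cliffordChar_apply_mem b, (charDeg_cliffordChar b).symm ▸ hpT⟩
  refine two_le_acd (L := {f ∈ S | f 1 = 1}) (M := Set.range (cliffordChar χ))
    (T ⊔ commutator H).index ((irr_finite _).subset (Set.sep_subset _ _)) ⟨_, hmem 1⟩
    (Set.sep_subset _ _) (Set.range_subset_iff.2 hmem)
    (fun f hf => two_le_re_of_mem_irr hf.1.1 hf.1.2.2 fun h => hf.2 ⟨hf.1, h⟩)
    (fun f hf => by simp [hf.2]) ?_ ?_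
  · rintro _ ⟨b, rfl⟩
    rw [cliffordChar_one, Complex.natCast_re]
    exact_mod_cast index_sup_commutator_add_two_le hT
  · rw [Set.ncard_range_of_injective cliffordChar_injective]
    exact (ncard_linear_irr_le hirr hφ fun f hf => ⟨hf.1.1, hf.2, hf.1.2.1⟩).trans
      (card_monoidHom_units_le_mul k T)

theorem nonabelian_semidirect_acd_pprime_ge_two
    (p : ℕ) (hp : p.Prime)
    (H V : Type) [Group H] [Fintype H] (hnab : ∃ x y : H, x * y ≠ y * x)
    [CommGroup V] [Fintype V] [Nontrivial V]
    (helem : ∀ v : V, v ^ p = 1)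
    (φ : H →* MulAut V) (hfaith : Function.Injective φ)
    (hirr : ∀ W : Subgroup V, (∀ h : H, ∀ w ∈ W, φ h w ∈ W) → W = ⊥ ∨ W = ⊤)
    (k : Subfield ℂ) (hk : ∀ ζ : ℂ, IsPrimitiveRoot ζ p → ζ ∈ k) :
    2 ≤ acd {f ∈ Irr (V ⋊[φ] H) | (∀ g, f g ∈ k) ∧ ¬ p ∣ charDeg f} := by
  obtain ⟨x, y, hxy⟩ := hnab
  exact nonabelian_semidirect_acd_pprime_ge_two_general p hp H V helem φ
    ⟨x, y, fun h => hxy (hfaith h)⟩ hirr k hk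
end
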